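/- Let q be a prime power and let δ ∈ (0, 1 − 1/q) be a constant. Then for all sufficiently large n (depending only on q and δ) the following holds with d = ⌊δn⌋: if k is a positive integer satisfying (q^k − 1)/(q − 1) < 1.7 · q^n / ∑_{i=0}^{d−1} C(n,i)(q−1)^i, then there exists a k-dimensional linear subspace C ⊆ 𝔽_q^n all of whose nonzero elements have Hamming weight at least d (i.e., an [n,k] linear code over 𝔽_q with minimum Hamming distance at least d). -/

import Mathlib

open Finset
open scoped Classical

/-!
Take a uniformly random linear map `G : F^k → F^n` and let `X` be the number of projective points
of `F^k` that `G` sends into the Hamming ball of radius `d - 1`. If `X = 0` for some `G`, then `G`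
is injective and its range is the desired code. Otherwise `(X - 1)(X - 3)(X - 4) ≥ 0` for every `G`,
hence in expectation. Put `λ = E X`. Distinct points are pairwise independent, so the second
factorial moment of `X` is `λ² - o(1)`. Three dependent points give words `u`, `v`, `u + v` in
the ball; below the relative radius `1 - 1/q` such pairs are an exponentially small fraction of
all pairs of words of the ball, so the third factorial moment is at most `λ³ + o(1)`. This yields
`(λ - 2)(λ² - 3λ + 6) = λ³ - 5λ² + 12λ - 12 ≥ -o(1)`, which fails when `λ` is bounded away from `2`
from below.
-/

namespace GilbertVarshamov

open Filter Topology Module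
open scoped BigOperators LinearAlgebra.Projectivization

section RandomLinearMap

lemma expect_comp_of_surjective {A B : Type*} [AddGroup A] [AddGroup B] [Fintype A] [Fintype B]
    {φ : A →+ B} (hφ : Function.Surjective φ) (f : B → ℝ) :
    𝔼 a, f (φ a) = 𝔼 b, f b := by
  have shift (b : B) : 𝔼 a, f (φ a) = 𝔼 a, f (φ a + b) := by
    obtain ⟨a₀, rfl⟩ := hφ b
    exact (Fintype.expect_equiv (Equiv.addRight a₀) _ _ (by simp)).symm
  calc 𝔼 a, f (φ a) = 𝔼 b : B, 𝔼 a, f (φ a + b) := by simp only [← shift, Fintype.expect_const]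
    _ = 𝔼 a, 𝔼 b, f (φ a + b) := expect_comm ..
    _ = 𝔼 _a : A, 𝔼 b, f b :=
      expect_congr rfl fun a _ ↦ Fintype.expect_equiv (Equiv.addLeft (φ a)) _ _ (by simp)
    _ = 𝔼 b, f b := Fintype.expect_const _

variable {F V W : Type*} [Field F] [AddCommGroup V] [Module F V] [AddCommGroup W] [Module F W]

lemma exists_linearMap_eq_of_linearIndependent {κ : Type*} {a : κ → V}
    (ha : LinearIndependent F a) (w : κ → W) : ∃ G : V →ₗ[F] W, ∀ i, G (a i) = w i := by
  obtain ⟨G, hG⟩ := LinearMap.exists_extend ((Basis.span ha).constr F w)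
  refine ⟨G, fun i ↦ ?_⟩
  have := LinearMap.congr_fun hG (Basis.span ha i)
  rwa [Basis.constr_basis, LinearMap.comp_apply, Submodule.subtype_apply, Basis.span_apply] at this

lemma expect_apply_of_linearIndependent [Fintype W] [Fintype (V →ₗ[F] W)] {κ : Type*} [Fintype κ]
    [DecidableEq κ] {a : κ → V} (ha : LinearIndependent F a) (f : (κ → W) → ℝ) :
    𝔼 G : V →ₗ[F] W, f (fun i ↦ G (a i)) = 𝔼 w, f w :=
  expect_comp_of_surjective
    (φ := (LinearMap.pi fun i ↦ LinearMap.applyₗ (a i) : (V →ₗ[F] W) →ₗ[F] κ → W).toAddMonoidHom)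
    (fun w ↦ (exists_linearMap_eq_of_linearIndependent ha w).imp fun _ ↦ funext) f

lemma expect_forall_mem_of_linearIndependent [Fintype W] [Fintype (V →ₗ[F] W)]
    {κ : Type*} [Fintype κ] {a : κ → V} (ha : LinearIndependent F a) (S : Finset W) :
    𝔼 G : V →ₗ[F] W, (if ∀ i, G (a i) ∈ S then 1 else 0 : ℝ) =
      (#S / Fintype.card W : ℝ) ^ Fintype.card κ := by
  rw [expect_apply_of_linearIndependent ha fun w ↦ if ∀ i, w i ∈ S then 1 else 0,
    Fintype.expect_eq_sum_div_card, sum_boole]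
  have : ({w : κ → W | ∀ i, w i ∈ S} : Finset _) = Fintype.piFinset fun _ ↦ S := by ext; simp
  simp [this, div_pow]

/-- The pairs of elements of `S` whose sum lies in `S` again. Their number bounds the contribution
of linearly dependent triples of points to the third moment of `hits`. -/
noncomputable def schurPairs {W : Type*} [Add W] (S : Finset W) : Finset (W × W) :=
  {p ∈ S ×ˢ S | p.1 + p.2 ∈ S}

lemma mem_schurPairs {W : Type*} [Add W] {S : Finset W} {p : W × W} :
    p ∈ schurPairs S ↔ (p.1 ∈ S ∧ p.2 ∈ S) ∧ p.1 + p.2 ∈ S := by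
  simp [schurPairs]

lemma expect_mem_of_linearIndependent_pair [Fintype W] [Fintype (V →ₗ[F] W)] {a b : V}
    (hab : LinearIndependent F ![a, b]) (T : Finset (W × W)) :
    𝔼 G : V →ₗ[F] W, (if (G a, G b) ∈ T then 1 else 0 : ℝ) = #T / (Fintype.card W : ℝ) ^ 2 :=
  calc 𝔼 G : V →ₗ[F] W, (if (G a, G b) ∈ T then 1 else 0 : ℝ)
    _ = 𝔼 w : Fin 2 → W, if (w 0, w 1) ∈ T then 1 else 0 :=
      expect_apply_of_linearIndependent hab fun w ↦ if (w 0, w 1) ∈ T then 1 else 0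
    _ = 𝔼 p : W × W, if p ∈ T then 1 else 0 :=
      Fintype.expect_equiv (finTwoArrowEquiv W) _ _ fun _ ↦ rfl
    _ = #T / (Fintype.card W : ℝ) ^ 2 := by
      rw [Fintype.expect_eq_sum_div_card, sum_boole]
      simp [sq]

/-- The number of points of `ℙ F V` sent into `S` by `G`, the random variable of the moment method.
It is independent of the choice of representatives when `S` is invariant under scaling. -/
noncomputable def hits [Fintype (ℙ F V)] (S : Finset W) (G : V →ₗ[F] W) : ℕ :=
  #{p : ℙ F V | G p.rep ∈ S}

lemma card_descFactorial_eq_sum {P : Type*} [Fintype P] (T : Finset P) (r : ℕ) :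
    (#T).descFactorial r = ∑ e : Fin r ↪ P, if ∀ i, e i ∈ T then 1 else 0 := by
  rw [← card_filter, ← Fintype.card_subtype, ← Fintype.card_coe T, ← Fintype.card_fin r,
    ← Fintype.card_embedding_eq, Fintype.card_fin]
  exact Fintype.card_congr
    { toFun e := ⟨e.trans (.subtype _), fun i ↦ (e i).2⟩
      invFun e := ⟨fun i ↦ ⟨e.1 i, e.2 i⟩, fun i j h ↦ e.1.injective (congrArg Subtype.val h)⟩ }

lemma expect_descFactorial_hits [Fintype (ℙ F V)] [Fintype (V →ₗ[F] W)] (S : Finset W) (r : ℕ) :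
    𝔼 G : V →ₗ[F] W, ((hits S G).descFactorial r : ℝ) =
      ∑ e : Fin r ↪ ℙ F V, 𝔼 G : V →ₗ[F] W, if ∀ i, G (e i).rep ∈ S then 1 else 0 := by
  simp only [hits, card_descFactorial_eq_sum, mem_filter_univ, Nat.cast_sum, Nat.cast_ite,
    Nat.cast_one, Nat.cast_zero]
  exact expect_sum_comm ..

lemma expect_forall_rep_mem_of_independent [Fintype W] [Fintype (V →ₗ[F] W)] {r : ℕ}
    {e : Fin r → ℙ F V} (he : Projectivization.Independent e) (S : Finset W) :
    𝔼 G : V →ₗ[F] W, (if ∀ i, G (e i).rep ∈ S then 1 else 0 : ℝ) =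
      (#S / Fintype.card W : ℝ) ^ r := by
  have := expect_forall_mem_of_linearIndependent (Projectivization.independent_iff.1 he) S
  simp only [Fintype.card_fin, Function.comp_apply] at this
  convert this

lemma expect_descFactorial_hits_of_independent [Fintype (ℙ F V)] [Fintype W]
    [Fintype (V →ₗ[F] W)] (S : Finset W) {r : ℕ}
    (hr : ∀ e : Fin r ↪ ℙ F V, Projectivization.Independent e) :
    𝔼 G : V →ₗ[F] W, ((hits S G).descFactorial r : ℝ) =
      (Fintype.card (ℙ F V)).descFactorial r * (#S / Fintype.card W : ℝ) ^ r := by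
  rw [expect_descFactorial_hits]
  simp [expect_forall_rep_mem_of_independent (hr _), Fintype.card_embedding_eq]

lemma expect_hits [Fintype (ℙ F V)] [Fintype W] [Fintype (V →ₗ[F] W)] (S : Finset W) :
    𝔼 G : V →ₗ[F] W, (hits S G : ℝ) = Fintype.card (ℙ F V) * (#S / Fintype.card W : ℝ) := by
  simpa using expect_descFactorial_hits_of_independent (V := V) S (r := 1) fun e ↦
    Projectivization.independent_iff.2 (.of_subsingleton 0 (e 0).rep_nonzero)

lemma expect_descFactorial_two_hits [Fintype (ℙ F V)] [Fintype W] [Fintype (V →ₗ[F] W)]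
    (S : Finset W) :
    𝔼 G : V →ₗ[F] W, ((hits S G).descFactorial 2 : ℝ) =
      (Fintype.card (ℙ F V)).descFactorial 2 * (#S / Fintype.card W : ℝ) ^ 2 :=
  expect_descFactorial_hits_of_independent S fun e ↦ by
    have : (e : Fin 2 → ℙ F V) = ![e 0, e 1] := by ext i; fin_cases i <;> rfl
    rw [this, Projectivization.independent_pair_iff_ne]
    exact e.injective.ne zero_ne_one

lemma linearIndependent_pair_rep {p₁ p₂ : ℙ F V} (h : p₁ ≠ p₂) :
    LinearIndependent F ![p₁.rep, p₂.rep] := by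
  convert Projectivization.independent_iff.1 ((Projectivization.independent_pair_iff_ne p₁ p₂).2 h)
  ext i; fin_cases i <;> rfl

lemma exists_smul_add_smul_eq_rep {e : Fin 3 ↪ ℙ F V} (he : ¬ Projectivization.Independent e) :
    ∃ α β : Fˣ, α • (e 0).rep + β • (e 1).rep = (e 2).rep := by
  have rep_ne {i j : Fin 3} (hij : i ≠ j) (c : F) : c • (e i).rep ≠ (e j).rep :=
    (LinearIndependent.pair_iff' (e i).rep_nonzero).1
      (linearIndependent_pair_rep (e.injective.ne hij)) c
  have mem_span : (e 2).rep ∈ Submodule.span F {(e 0).rep, (e 1).rep} := by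
    contrapose! he
    have cons : Projectivization.rep ∘ e = Fin.snoc ![(e 0).rep, (e 1).rep] (e 2).rep := by
      ext i; fin_cases i <;> rfl
    rw [Projectivization.independent_iff, cons, linearIndependent_finSnoc]
    refine ⟨linearIndependent_pair_rep (e.injective.ne zero_ne_one), ?_⟩
    simpa [Matrix.range_cons, Set.pair_comm] using he
  obtain ⟨α, β, h⟩ := Submodule.mem_span_pair.1 mem_span
  have hα : α ≠ 0 := by
    rintro rfl
    exact rep_ne (by decide : (1 : Fin 3) ≠ 2) β (by simpa using h)
  have hβ : β ≠ 0 := by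
    rintro rfl
    exact rep_ne (by decide : (0 : Fin 3) ≠ 2) α (by simpa using h)
  exact ⟨.mk0 α hα, .mk0 β hβ, h⟩

lemma expect_hit_triple_le [Fintype W] [Fintype (V →ₗ[F] W)] {S : Finset W}
    (hS : ∀ (a : Fˣ), ∀ w ∈ S, a • w ∈ S) {e : Fin 3 ↪ ℙ F V}
    (he : ¬ Projectivization.Independent e) :
    𝔼 G : V →ₗ[F] W, (if ∀ i, G (e i).rep ∈ S then 1 else 0 : ℝ) ≤
      #(schurPairs S) / (Fintype.card W : ℝ) ^ 2 := by
  obtain ⟨α, β, hαβ⟩ := exists_smul_add_smul_eq_rep he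
  have pair : LinearIndependent F ![α • (e 0).rep, β • (e 1).rep] := by
    convert (linearIndependent_pair_rep (e.injective.ne zero_ne_one)).units_smul ![α, β] using 1
    ext i; fin_cases i <;> rfl
  rw [← expect_mem_of_linearIndependent_pair pair]
  refine expect_le_expect fun G _ ↦ ?_
  split_ifs with hG hG'
  · rfl
  · refine absurd (mem_schurPairs.2 ⟨⟨?_, ?_⟩, ?_⟩) hG'
    · simpa using hS α _ (hG 0)
    · simpa using hS β _ (hG 1)
    · simpa [← hαβ] using hG 2
  · exact zero_le_one
  · rfl

lemma card_not_independent_le [Fintype F] [Fintype (ℙ F V)] :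
    #{e : Fin 3 ↪ ℙ F V | ¬ Projectivization.Independent e} ≤
      Fintype.card (ℙ F V) ^ 2 * Fintype.card F ^ 2 := by
  have key (e : Fin 3 ↪ ℙ F V) : ∃ c : F × F, ¬ Projectivization.Independent e →
      c.1 • (e 0).rep + c.2 • (e 1).rep = (e 2).rep := by
    by_cases he : Projectivization.Independent e
    · exact ⟨0, fun h ↦ absurd he h⟩
    · obtain ⟨α, β, h⟩ := exists_smul_add_smul_eq_rep he
      exact ⟨(α, β), fun _ ↦ h⟩
  choose c hc using key
  calc #{e : Fin 3 ↪ ℙ F V | ¬ Projectivization.Independent e}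
    _ ≤ #(univ : Finset ((ℙ F V × ℙ F V) × (F × F))) := by
      refine card_le_card_of_injOn (fun e ↦ ((e 0, e 1), c e)) (by simp) fun e he e' he' h ↦ ?_
      simp only [Prod.mk.injEq] at h
      obtain ⟨⟨h0, h1⟩, h2⟩ := h
      have : e 2 = e' 2 := by
        rw [← (e 2).mk_rep, ← (e' 2).mk_rep]
        congr 1
        rw [← hc e (by simpa using he), ← hc e' (by simpa using he'), h0, h1, h2]
      ext i; fin_cases i <;> assumption
    _ = Fintype.card (ℙ F V) ^ 2 * Fintype.card F ^ 2 := by simp [sq]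

lemma expect_descFactorial_three_hits_le [Fintype F] [Fintype (ℙ F V)] [Fintype W]
    [Fintype (V →ₗ[F] W)] {S : Finset W} (hS : ∀ (a : Fˣ), ∀ w ∈ S, a • w ∈ S) :
    𝔼 G : V →ₗ[F] W, ((hits S G).descFactorial 3 : ℝ) ≤
      (Fintype.card (ℙ F V) * (#S / Fintype.card W : ℝ)) ^ 3 +
        (Fintype.card (ℙ F V) * Fintype.card F : ℝ) ^ 2 *
          (#(schurPairs S) / (Fintype.card W : ℝ) ^ 2) := by
  rw [expect_descFactorial_hits,
    ← sum_filter_add_sum_filter_not univ fun e : Fin 3 ↪ ℙ F V ↦ Projectivization.Independent e]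
  gcongr
  · rw [sum_congr rfl fun e he ↦
        expect_forall_rep_mem_of_independent (mem_filter.1 he).2 S, sum_const, nsmul_eq_mul,
      mul_pow]
    gcongr
    calc (#{e : Fin 3 ↪ ℙ F V | Projectivization.Independent e} : ℝ)
      _ ≤ Fintype.card (Fin 3 ↪ ℙ F V) := mod_cast card_le_univ _
      _ ≤ Fintype.card (ℙ F V) ^ 3 := by
        rw [Fintype.card_embedding_eq, Fintype.card_fin]
        exact_mod_cast Nat.descFactorial_le_pow _ _
  · refine (sum_le_card_nsmul _ _ _ fun e he ↦
      expect_hit_triple_le hS (mem_filter.1 he).2).trans ?_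
    rw [nsmul_eq_mul, mul_pow]
    gcongr
    exact_mod_cast card_not_independent_le

/- This is `0 ≤ (h - 1) (h - 3) (h - 4)` expanded in falling factorials of `h`. -/
lemma five_mul_descFactorial_two_add_le {h : ℕ} (hh : h ≠ 0) :
    5 * h.descFactorial 2 + 12 ≤ h.descFactorial 3 + 12 * h := by
  match h with
  | 1 | 2 => decide
  | k + 3 =>
    have three : (k + 3).descFactorial 3 = (k + 3) * (k + 2) * (k + 1) := by
      simp [Nat.descFactorial]; ring
    have two : (k + 3).descFactorial 2 = (k + 3) * (k + 2) := by
      simp [Nat.descFactorial]; ring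
    rw [two, three]
    nlinarith [Nat.le_self_pow two_ne_zero k]

lemma cubic_moment_lt {P b c : ℝ} (hP : 0 ≤ P) (hb : 0 ≤ b) (hPb : P * b ≤ c) (hc : c < 2)
    (hb' : b ≤ (2 - c) / 4) :
    (P * b) ^ 3 + (2 - c) / 4 * (P * b) ^ 2 + 12 * (P * b) < 5 * (P * (P - 1) * b ^ 2) + 12 := by
  set z := P * b with hz
  have : 0 ≤ z := by positivity
  have factor : 5 * (P * (P - 1) * b ^ 2) + 12 - z ^ 3 - 12 * z =
      (2 - z) * ((z - 3 / 2) ^ 2 + 15 / 4) - 5 * (z * b) := by rw [hz]; ring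
  have cube_lower : (2 - z) * (15 / 4) ≤ (2 - z) * ((z - 3 / 2) ^ 2 + 15 / 4) :=
    mul_le_mul_of_nonneg_left (by linarith [sq_nonneg (z - 3 / 2)]) (by linarith)
  have sq_upper : (2 - c) / 4 * z ^ 2 ≤ (2 - c) / 4 * 2 ^ 2 := by
    gcongr; linarith
  have cross_upper : z * b ≤ 2 * ((2 - c) / 4) := by
    gcongr; linarith
  linarith [factor]

lemma forall_notMem_of_hits_eq_zero [Fintype (ℙ F V)] {S : Finset W}
    (hS : ∀ (a : Fˣ), ∀ w ∈ S, a • w ∈ S) {G : V →ₗ[F] W} (hG : hits S G = 0) :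
    ∀ v ≠ 0, G v ∉ S := by
  intro v hv hGv
  obtain ⟨a, ha⟩ := Projectivization.exists_smul_eq_mk_rep F v hv
  have hit : G (Projectivization.mk F v hv).rep ∈ S := by
    simpa [← ha] using hS a _ hGv
  simp only [hits, card_eq_zero, filter_eq_empty_iff, mem_univ, true_imp_iff] at hG
  exact hG hit

lemma exists_linearMap_forall_notMem [Finite V] [Fintype F] [Fintype (ℙ F V)] [Fintype W]
    {S : Finset W} (hS : ∀ (a : Fˣ), ∀ w ∈ S, a • w ∈ S) {c : ℝ} (hc : c < 2)
    (hmean : Fintype.card (ℙ F V) * (#S / Fintype.card W : ℝ) ≤ c)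
    (hdens : (#S / Fintype.card W : ℝ) ≤ (2 - c) / 4)
    (hschur : (Fintype.card F : ℝ) ^ 2 * #(schurPairs S) ≤ (2 - c) / 4 * #S ^ 2) :
    ∃ G : V →ₗ[F] W, ∀ v ≠ 0, G v ∉ S := by
  have : Finite (V →ₗ[F] W) := DFunLike.finite _
  have := Fintype.ofFinite (V →ₗ[F] W)
  suffices ∃ G : V →ₗ[F] W, hits S G = 0 from
    this.imp fun _ ↦ forall_notMem_of_hits_eq_zero hS
  by_contra! hits_ne
  have moments : 5 * (𝔼 G : V →ₗ[F] W, ((hits S G).descFactorial 2 : ℝ)) + 12 ≤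
      (𝔼 G : V →ₗ[F] W, ((hits S G).descFactorial 3 : ℝ)) +
        12 * 𝔼 G : V →ₗ[F] W, (hits S G : ℝ) := by
    calc _ = 𝔼 G : V →ₗ[F] W, (5 * ((hits S G).descFactorial 2 : ℝ) + 12) := by
          rw [expect_add_distrib, mul_expect, Fintype.expect_const]
      _ ≤ 𝔼 G : V →ₗ[F] W, ((hits S G).descFactorial 3 + 12 * (hits S G : ℝ)) :=
        expect_le_expect fun G _ ↦ mod_cast five_mul_descFactorial_two_add_le (hits_ne G)
      _ = _ := by rw [expect_add_distrib, mul_expect]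
  rw [expect_hits, expect_descFactorial_two_hits, Nat.cast_descFactorial_two] at moments
  have schur_le : (Fintype.card (ℙ F V) * Fintype.card F : ℝ) ^ 2 *
      (#(schurPairs S) / (Fintype.card W : ℝ) ^ 2) ≤
      (2 - c) / 4 * (Fintype.card (ℙ F V) * (#S / Fintype.card W : ℝ)) ^ 2 := by
    calc _ = (Fintype.card (ℙ F V) / Fintype.card W : ℝ) ^ 2 *
          ((Fintype.card F : ℝ) ^ 2 * #(schurPairs S)) := by ring
      _ ≤ (Fintype.card (ℙ F V) / Fintype.card W : ℝ) ^ 2 * ((2 - c) / 4 * #S ^ 2) := by gcongr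
      _ = _ := by ring
  have := cubic_moment_lt (Nat.cast_nonneg _) (by positivity) hmean hc hdens
  linarith [expect_descFactorial_three_hits_le (V := V) hS]

end RandomLinearMap

section HammingBall

variable {F ι : Type*} [Fintype ι] [DecidableEq F]

lemma pow_hammingNorm_eq_prod [Zero F] {R : Type*} [CommMonoid R] (y : R) (v : ι → F) :
    y ^ hammingNorm v = ∏ i, if v i = 0 then 1 else y := by
  rw [hammingNorm, prod_ite]; simp

variable [Fintype F]

lemma sum_ite_eq_zero [Zero F] {R : Type*} [CommSemiring R] (y z : R) :
    ∑ a : F, (if a = 0 then y else z) = y + (Fintype.card F - 1 : ℕ) * z := by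
  rw [← add_sum_erase _ _ (mem_univ (0 : F)),
    sum_congr rfl fun a ha ↦ if_neg (ne_of_mem_erase ha)]
  simp [card_erase_of_mem]

lemma sum_pow_hammingNorm [Zero F] [DecidableEq ι] {R : Type*} [CommSemiring R] (y : R) :
    ∑ v : ι → F, y ^ hammingNorm v =
      (1 + (Fintype.card F - 1 : ℕ) * y) ^ Fintype.card ι := by
  simp only [pow_hammingNorm_eq_prod,
    ← Fintype.prod_sum fun (_ : ι) (a : F) ↦ if a = 0 then 1 else y,
    sum_ite_eq_zero, prod_const, card_univ]

lemma card_hammingNorm_eq [Zero F] [DecidableEq ι] (t : ℕ) :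
    #{v : ι → F | hammingNorm v = t} =
      (Fintype.card ι).choose t * (Fintype.card F - 1) ^ t := by
  have enumerator := sum_pow_hammingNorm (F := F) (ι := ι) (Polynomial.X : Polynomial ℕ)
  have coeff_right : ((1 + ((Fintype.card F - 1 : ℕ) : Polynomial ℕ) * Polynomial.X) ^
      Fintype.card ι).coeff t = (Fintype.card ι).choose t * (Fintype.card F - 1) ^ t := by
    have scaled := Polynomial.comp_C_mul_X_coeff (n := t) (r := Fintype.card F - 1)
      (p := ((1 + Polynomial.X) ^ Fintype.card ι : Polynomial ℕ))
    rw [Polynomial.coeff_one_add_X_pow, Polynomial.pow_comp] at scaled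
    simpa [mul_comm] using scaled
  rw [← coeff_right, ← enumerator, Polynomial.finsetSum_coeff, card_filter]
  simp only [Polynomial.coeff_X_pow, eq_comm]

variable (F ι) in
/-- The closed Hamming ball `B_q(n, r)` around the origin, for words indexed by `ι`: the set that
the nonzero words of the code have to avoid. -/
def hammingBall [Zero F] [DecidableEq ι] (r : ℕ) : Finset (ι → F) :=
  {v | hammingNorm v ≤ r}

lemma mem_hammingBall [Zero F] [DecidableEq ι] {r : ℕ} {v : ι → F} :
    v ∈ hammingBall F ι r ↔ hammingNorm v ≤ r := by
  simp [hammingBall]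

lemma card_hammingBall [Zero F] [DecidableEq ι] (r : ℕ) :
    #(hammingBall F ι r) =
      ∑ t ∈ range (r + 1), (Fintype.card ι).choose t * (Fintype.card F - 1) ^ t := by
  rw [card_eq_sum_card_fiberwise (f := hammingNorm) (t := range (r + 1))
    fun v hv ↦ by simpa [hammingBall, Nat.lt_succ_iff] using hv]
  refine sum_congr rfl fun t ht ↦ ?_
  rw [← card_hammingNorm_eq (F := F)]
  congr 1
  ext v
  simp only [mem_filter, mem_hammingBall, mem_univ, true_and, and_iff_right_iff_imp]
  rintro rfl
  exact Nat.lt_succ_iff.1 (mem_range.1 ht)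

lemma cast_card_hammingBall [Zero F] [DecidableEq ι] (r : ℕ) :
    (#(hammingBall F ι r) : ℝ) =
      ∑ t ∈ range (r + 1), ((Fintype.card ι).choose t : ℝ) * ((Fintype.card F : ℝ) - 1) ^ t := by
  simp [card_hammingBall, Nat.cast_pred Fintype.card_pos]

lemma card_hammingBall_mul_pow_le [Zero F] [DecidableEq ι] {y : ℝ} (hy₀ : 0 ≤ y) (hy₁ : y ≤ 1)
    (r : ℕ) : #(hammingBall F ι r) * y ^ r ≤
      (1 + (Fintype.card F - 1) * y) ^ Fintype.card ι := by
  rw [← Nat.cast_pred Fintype.card_pos, ← sum_pow_hammingNorm (F := F), ← nsmul_eq_mul]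
  refine (card_nsmul_le_sum _ _ _ fun v hv ↦ ?_).trans
    (sum_le_univ_sum_of_nonneg fun v ↦ by positivity)
  exact pow_le_pow_of_le_one hy₀ hy₁ (mem_hammingBall.1 hv)

lemma sum_letter_pairs [AddGroup F] {R : Type*} [CommRing R] (x y : R) :
    ∑ c : F × F, (if c.1 = 0 then 1 else x) * (if c.2 = 0 then 1 else x) *
        (if c.1 + c.2 = 0 then 1 else y) =
      y * (1 + (Fintype.card F - 1 : ℕ) * x) ^ 2 +
        (1 - y) * (1 + (Fintype.card F - 1 : ℕ) * x ^ 2) := by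
  rw [← sum_ite_eq_zero (F := F) 1 x, ← sum_ite_eq_zero (F := F) 1 (x ^ 2), sq, sum_mul_sum,
    mul_sum, mul_sum, ← sum_add_distrib, Fintype.sum_prod_type]
  refine sum_congr rfl fun a _ ↦ ?_
  calc ∑ b, (if a = 0 then 1 else x) * (if b = 0 then 1 else x) * (if a + b = 0 then 1 else y)
    _ = ∑ b, (y * ((if a = 0 then 1 else x) * if b = 0 then 1 else x) +
          if b = -a then (1 - y) * ((if a = 0 then 1 else x) * if b = 0 then 1 else x) else 0) :=
      sum_congr rfl fun b _ ↦ by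
        simp only [add_eq_zero_iff_eq_neg']
        split_ifs <;> ring
    _ = _ := by
      rw [sum_add_distrib, Fintype.sum_ite_eq', ← mul_sum]
      simp only [neg_eq_zero]
      split_ifs <;> ring

lemma sum_pow_hammingNorm_add [AddGroup F] [DecidableEq ι] {R : Type*} [CommRing R] (x y : R) :
    ∑ p : (ι → F) × (ι → F),
        x ^ hammingNorm p.1 * x ^ hammingNorm p.2 * y ^ hammingNorm (p.1 + p.2) =
      (y * (1 + (Fintype.card F - 1 : ℕ) * x) ^ 2 +
        (1 - y) * (1 + (Fintype.card F - 1 : ℕ) * x ^ 2)) ^ Fintype.card ι := by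
  rw [← sum_letter_pairs (F := F), ← card_univ, ← prod_const, Fintype.prod_sum]
  simp only [pow_hammingNorm_eq_prod, ← prod_mul_distrib]
  exact (Fintype.sum_equiv (Equiv.arrowProdEquivProdArrow ι (fun _ ↦ F) fun _ ↦ F) _ _
    fun _ ↦ rfl).symm

lemma card_schurPairs_hammingBall_mul_pow_le [AddGroup F] [DecidableEq ι] {x y : ℝ}
    (hx₀ : 0 ≤ x) (hx₁ : x ≤ 1) (hy₀ : 0 ≤ y) (hy₁ : y ≤ 1) (r : ℕ) :
    #(schurPairs (hammingBall F ι r)) * (x ^ 2 * y) ^ r ≤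
      (y * (1 + (Fintype.card F - 1) * x) ^ 2 +
        (1 - y) * (1 + (Fintype.card F - 1) * x ^ 2)) ^ Fintype.card ι := by
  rw [← Nat.cast_pred Fintype.card_pos, ← sum_pow_hammingNorm_add, ← nsmul_eq_mul]
  refine (card_nsmul_le_sum _ _ _ fun p hp ↦ ?_).trans
    (sum_le_univ_sum_of_nonneg fun p ↦ by positivity)
  obtain ⟨⟨h₁, h₂⟩, h₁₂⟩ := mem_schurPairs.1 hp
  rw [mem_hammingBall] at h₁ h₂ h₁₂
  rw [sq, mul_pow, mul_pow]
  gcongr ?_ * ?_ * ?_ <;> apply pow_le_pow_of_le_one <;> assumption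

end HammingBall

section EntropyBounds

lemma factorial_mul_pow_le (m t : ℕ) : m.factorial * m ^ t ≤ t.factorial * m ^ m := by
  rcases le_total m t with h | h
  · calc m.factorial * m ^ t = m.factorial * m ^ (t - m) * m ^ m := by
          rw [mul_assoc, ← pow_add, Nat.sub_add_cancel h]
      _ ≤ t.factorial * m ^ m := by gcongr; exact Nat.factorial_mul_pow_sub_le_factorial h
  · calc m.factorial * m ^ t = t.factorial * m.descFactorial (m - t) * m ^ t := by
          rw [← Nat.factorial_mul_descFactorial (Nat.sub_le m t), Nat.sub_sub_self h]
      _ ≤ t.factorial * m ^ (m - t) * m ^ t := by gcongr; exact Nat.descFactorial_le_pow _ _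
      _ = t.factorial * m ^ m := by rw [mul_assoc, ← pow_add, Nat.sub_add_cancel h]

lemma choose_mul_pow_mul_pow_le {n m t : ℕ} (hm : m ≤ n) (ht : t ≤ n) :
    n.choose t * m ^ t * (n - m) ^ (n - t) ≤ n.choose m * m ^ m * (n - m) ^ (n - m) := by
  refine Nat.le_of_mul_le_mul_right ?_
    (Nat.mul_pos m.factorial_pos (n - m).factorial_pos)
  calc n.choose t * m ^ t * (n - m) ^ (n - t) * (m.factorial * (n - m).factorial)
    _ = n.choose t * (m.factorial * m ^ t) * ((n - m).factorial * (n - m) ^ (n - t)) := by ring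
    _ ≤ n.choose t * (t.factorial * m ^ m) * ((n - t).factorial * (n - m) ^ (n - m)) := by
      gcongr n.choose t * ?_ * ?_ <;> exact factorial_mul_pow_le ..
    _ = n.choose t * t.factorial * (n - t).factorial * (m ^ m * (n - m) ^ (n - m)) := by ring
    _ = n.choose m * m ^ m * (n - m) ^ (n - m) * (m.factorial * (n - m).factorial) := by
      rw [Nat.choose_mul_factorial_mul_factorial ht, ← Nat.choose_mul_factorial_mul_factorial hm]
      ring

lemma pow_self_le_mul_choose {n m : ℕ} (hm : m ≤ n) :
    n ^ n ≤ (n + 1) * (n.choose m * m ^ m * (n - m) ^ (n - m)) :=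
  calc n ^ n = (m + (n - m)) ^ n := by rw [Nat.add_sub_cancel' hm]
    _ = ∑ t ∈ range (n + 1), m ^ t * (n - m) ^ (n - t) * n.choose t := add_pow ..
    _ ≤ ∑ _t ∈ range (n + 1), n.choose m * m ^ m * (n - m) ^ (n - m) :=
      sum_le_sum fun t ht ↦ by
        rw [mul_comm, ← mul_assoc]
        exact choose_mul_pow_mul_pow_le hm (mem_range_succ_iff.1 ht)
    _ = (n + 1) * (n.choose m * m ^ m * (n - m) ^ (n - m)) := by simp

lemma one_add_pow_le_one_add_mul_pow {s δ : ℝ} (hs : 0 ≤ s) (hδ₀ : 0 ≤ δ) (hδ₁ : δ ≤ 1) {n m : ℕ}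
    (hm : m ≤ δ * n) : (1 + s) ^ m ≤ (1 + δ * s) ^ n :=
  calc (1 + s) ^ m = (1 + s) ^ (m : ℝ) := (Real.rpow_natCast _ _).symm
    _ ≤ (1 + s) ^ (δ * n) := Real.rpow_le_rpow_of_exponent_le (by linarith) hm
    _ = ((1 + s) ^ δ) ^ n := by rw [Real.rpow_mul (by linarith), Real.rpow_natCast]
    _ ≤ (1 + δ * s) ^ n := by
      gcongr
      exact rpow_one_add_le_one_add_mul_self (by linarith) hδ₀ hδ₁

/- A binomial variable with success probability `θ` is exponentially unlikely to be at most `δ n`;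
here `y` is the parameter of Markov's inequality for `y ^ X`. -/
lemma exists_one_sub_add_mul_pow_le {δ θ : ℝ} (hδ : 0 ≤ δ) (hδθ : δ < θ) (hθ : θ ≤ 1) :
    ∃ y : ℝ, 0 < y ∧ y ≤ 1 ∧ ∃ b : ℝ, 0 ≤ b ∧ b < 1 ∧
      ∀ n m : ℕ, m ≤ δ * n → (1 - θ + θ * y) ^ n ≤ b ^ n * y ^ m := by
  set s := θ - δ with hs
  have hs₀ : 0 < s := sub_pos.2 hδθ
  have mgf_eq : 1 - θ + θ * (1 + s)⁻¹ = (1 + (1 - θ) * s) / (1 + s) := by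
    field_simp
    ring
  have : 0 ≤ (1 + (1 - θ) * s) / (1 + s) :=
    div_nonneg (by nlinarith) (by linarith)
  refine ⟨(1 + s)⁻¹, by positivity, inv_le_one_of_one_le₀ (by linarith),
    (1 + (1 - θ) * s) / (1 + s) * (1 + δ * s), by positivity, ?_, fun n m hm ↦ ?_⟩
  · rw [div_mul_eq_mul_div, div_lt_one (by linarith)]
    have : (1 + (1 - θ) * s) * (1 + δ * s) = 1 + s - s ^ 2 * (1 - δ * (1 - θ)) := by
      rw [hs]; ring
    have : 0 < s ^ 2 * (1 - δ * (1 - θ)) := mul_pos (by positivity) (by nlinarith)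
    linarith
  · calc (1 - θ + θ * (1 + s)⁻¹) ^ n
      _ = ((1 + (1 - θ) * s) / (1 + s)) ^ n * ((1 + s) ^ m * (1 + s)⁻¹ ^ m) := by
        rw [mgf_eq, inv_pow, mul_inv_cancel₀ (by positivity), mul_one]
      _ ≤ ((1 + (1 - θ) * s) / (1 + s)) ^ n * ((1 + δ * s) ^ n * (1 + s)⁻¹ ^ m) := by
        gcongr
        exact one_add_pow_le_one_add_mul_pow hs₀.le hδ (hδθ.le.trans hθ) hm
      _ = _ := by rw [mul_pow]; ring

end EntropyBounds

section BallEstimates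

variable {F ι : Type*} [Fintype ι] [DecidableEq ι] [Fintype F] [DecidableEq F] [Nontrivial F]

lemma card_hammingBall_le [Zero F] {r : ℕ} {y b : ℝ} (hy₀ : 0 < y) (hy₁ : y ≤ 1)
    (hb : (1 - (1 - 1 / (Fintype.card F : ℝ)) + (1 - 1 / (Fintype.card F : ℝ)) * y) ^
      Fintype.card ι ≤ b ^ Fintype.card ι * y ^ r) :
    (#(hammingBall F ι r) : ℝ) ≤ b ^ Fintype.card ι * (Fintype.card F : ℝ) ^ Fintype.card ι := by
  refine le_of_mul_le_mul_right ?_ (pow_pos hy₀ r)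
  calc (#(hammingBall F ι r) : ℝ) * y ^ r
    _ ≤ (1 + (Fintype.card F - 1) * y) ^ Fintype.card ι :=
      card_hammingBall_mul_pow_le hy₀.le hy₁ r
    _ = (1 - (1 - 1 / (Fintype.card F : ℝ)) + (1 - 1 / (Fintype.card F : ℝ)) * y) ^
          Fintype.card ι * (Fintype.card F : ℝ) ^ Fintype.card ι := by
      have : (Fintype.card F : ℝ) ≠ 0 := Nat.cast_ne_zero.2 Fintype.card_ne_zero
      rw [← mul_pow]
      congr 1
      field_simp
      ring
    _ ≤ b ^ Fintype.card ι * y ^ r * (Fintype.card F : ℝ) ^ Fintype.card ι := by gcongr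
    _ = _ := by ring

lemma choose_mul_pow_le_card_hammingBall [Zero F] (r : ℕ) :
    ((Fintype.card ι).choose r : ℝ) * ((Fintype.card F : ℝ) - 1) ^ r ≤ #(hammingBall F ι r) := by
  have : (0 : ℝ) ≤ Fintype.card F - 1 := sub_nonneg.2 (mod_cast Fintype.card_pos)
  rw [cast_card_hammingBall]
  exact single_le_sum (f := fun t ↦ ((Fintype.card ι).choose t : ℝ) * (Fintype.card F - 1 : ℝ) ^ t)
    (fun t _ ↦ by positivity) (self_mem_range_succ r)

lemma one_add_mul_pow_le_card_hammingBall [Zero F] {r : ℕ} (hr : r < Fintype.card ι) {x : ℝ}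
    (hx₀ : 0 ≤ x) (hx : x * (Fintype.card F - 1) * (Fintype.card ι - r) = r) :
    (1 + (Fintype.card F - 1) * x) ^ Fintype.card ι ≤
      (Fintype.card ι + 1) * (x ^ r * #(hammingBall F ι r)) := by
  set n := Fintype.card ι
  set q := (Fintype.card F : ℝ)
  have n_sub_pos : (0 : ℝ) < n - r := sub_pos.2 (mod_cast hr)
  have base_eq : 1 + (q - 1) * x = n / (n - r) := by
    rw [eq_div_iff n_sub_pos.ne']; linear_combination hx
  have pow_le : (n : ℝ) ^ n ≤ (n + 1) * (n.choose r * r ^ r * (n - r) ^ (n - r)) := by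
    rw [← Nat.cast_sub hr.le]
    exact_mod_cast pow_self_le_mul_choose hr.le
  have radius_pow : (r : ℝ) ^ r = x ^ r * (q - 1) ^ r * (n - r) ^ r := by
    rw [← mul_pow, ← mul_pow, hx]
  calc (1 + (q - 1) * x) ^ n = (n : ℝ) ^ n / (n - r) ^ n := by rw [base_eq, div_pow]
    _ ≤ (n + 1) * (n.choose r * r ^ r * (n - r) ^ (n - r)) / (n - r) ^ n := by gcongr
    _ = (n + 1) * (x ^ r * (n.choose r * (q - 1) ^ r)) := by
      rw [radius_pow, div_eq_iff (by positivity), ← pow_sub_mul_pow _ hr.le]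
      ring
    _ ≤ _ := by
      gcongr
      exact choose_mul_pow_le_card_hammingBall r

/-- The probability that the sum of two independent random letters is nonzero, when each letter of
an alphabet of size `q` is nonzero with probability `p` and then uniform. For `0 < p < 1 - 1/q`
it exceeds `p`, so the sum of two words of a Hamming ball typically leaves the ball. -/
noncomputable def sumDensity (q p : ℝ) : ℝ := p * (2 - q / (q - 1) * p)

lemma div_sub_one_mul_lt_one {q p : ℝ} (hq : 1 < q) (hp : p < 1 - 1 / q) :
    q / (q - 1) * p < 1 := by
  have q_sub_pos := sub_pos.2 hq
  calc q / (q - 1) * p < q / (q - 1) * (1 - 1 / q) := by gcongr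
    _ = 1 := by field_simp

lemma lt_sumDensity {q p : ℝ} (hq : 1 < q) (hp₀ : 0 < p) (hp₁ : p < 1 - 1 / q) :
    p < sumDensity q p :=
  lt_mul_of_one_lt_right hp₀ (by linarith [div_sub_one_mul_lt_one hq hp₁])

lemma sumDensity_le_one {q p : ℝ} (hq : 1 < q) (hp₀ : 0 ≤ p) (hp₁ : p < 1 - 1 / q) :
    sumDensity q p ≤ 1 := by
  have le_mul : p ≤ q / (q - 1) * p :=
    le_mul_of_one_le_left hp₀ ((one_le_div (sub_pos.2 hq)).2 (by linarith))
  calc sumDensity q p ≤ q / (q - 1) * p * (2 - q / (q - 1) * p) :=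
        mul_le_mul_of_nonneg_right le_mul (by linarith [div_sub_one_mul_lt_one hq hp₁])
    _ = 1 - (1 - q / (q - 1) * p) ^ 2 := by ring
    _ ≤ 1 := sub_le_self 1 (sq_nonneg _)

lemma exists_letter_weight {q p : ℝ} (hq : 1 < q) (hp₀ : 0 < p) (hp₁ : p < 1 - 1 / q) :
    ∃ x, 0 < x ∧ x ≤ 1 ∧ x * (q - 1) * (1 - p) = p := by
  have q_sub_pos : 0 < q - 1 := sub_pos.2 hq
  have one_sub_pos : 0 < 1 - p := by
    have : 0 < 1 / q := by positivity
    linarith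
  have mul_le : p * q ≤ q - 1 :=
    calc p * q ≤ (1 - 1 / q) * q := by gcongr
      _ = q - 1 := by field_simp
  refine ⟨p / ((1 - p) * (q - 1)), by positivity, ?_, by field_simp⟩
  rw [div_le_one (by positivity)]
  linarith

lemma pair_weight_eq {q p x y : ℝ} (hq : q ≠ 1) (hx : x * (q - 1) * (1 - p) = p) :
    y * (1 + (q - 1) * x) ^ 2 + (1 - y) * (1 + (q - 1) * x ^ 2) =
      (1 + (q - 1) * x) ^ 2 * (1 - sumDensity q p * (1 - y)) := by
  have q_sub_ne : q - 1 ≠ 0 := sub_ne_zero.2 hq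
  have one_sub_ne : 1 - p ≠ 0 := fun h ↦ by
    rw [h, mul_zero] at hx
    linarith
  rw [sumDensity, (by field_simp; linarith : x = p / ((1 - p) * (q - 1)))]
  field_simp
  ring

/- Chernoff's bound, with weight `x` on both words of a pair and `y` on their sum. -/
lemma card_schurPairs_hammingBall_le [AddGroup F] {r : ℕ} {p θ y b : ℝ} (hp₀ : 0 < p)
    (hp₁ : p < 1 - 1 / (Fintype.card F : ℝ)) (hpr : p * Fintype.card ι = r)
    (hr : r < Fintype.card ι) (hy₀ : 0 < y) (hy₁ : y ≤ 1) (hθ : θ ≤ sumDensity (Fintype.card F) p)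
    (hb : (1 - θ + θ * y) ^ Fintype.card ι ≤ b ^ Fintype.card ι * y ^ r) :
    (#(schurPairs (hammingBall F ι r)) : ℝ) ≤
      (Fintype.card ι + 1) ^ 2 * b ^ Fintype.card ι * #(hammingBall F ι r) ^ 2 := by
  set n := Fintype.card ι
  set q := (Fintype.card F : ℝ)
  have one_lt_q : 1 < q := Nat.one_lt_cast.2 Fintype.one_lt_card
  obtain ⟨x, x_pos, x_le, hx⟩ := exists_letter_weight one_lt_q hp₀ hp₁
  have hxr : x * (q - 1) * (n - r) = r := by
    rw [← hpr]
    linear_combination n * hx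
  set D := 1 - sumDensity q p * (1 - y)
  have D_le : D ≤ 1 - θ + θ * y := by nlinarith
  have D_nonneg : 0 ≤ D := by nlinarith [sumDensity_le_one one_lt_q hp₀.le hp₁]
  refine le_of_mul_le_mul_right ?_ (pow_pos (mul_pos (pow_pos x_pos 2) hy₀) r)
  calc (#(schurPairs (hammingBall F ι r)) : ℝ) * (x ^ 2 * y) ^ r
    _ ≤ ((1 + (q - 1) * x) ^ 2 * D) ^ n := by
      rw [← pair_weight_eq one_lt_q.ne' hx]
      exact card_schurPairs_hammingBall_mul_pow_le x_pos.le x_le hy₀.le hy₁ r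
    _ = ((1 + (q - 1) * x) ^ n) ^ 2 * D ^ n := by rw [mul_pow, pow_right_comm]
    _ ≤ ((n + 1) * (x ^ r * #(hammingBall F ι r))) ^ 2 * (b ^ n * y ^ r) := by
      gcongr
      · exact one_add_mul_pow_le_card_hammingBall hr x_pos.le hxr
      · exact (pow_le_pow_left₀ D_nonneg D_le n).trans hb
    _ = _ := by ring

end BallEstimates

section Asymptotics

variable {F : Type*} [Fintype F] [DecidableEq F] [Nontrivial F] {δ η : ℝ} {r : ℕ → ℕ}

lemma eventually_card_hammingBall_le [Zero F] (hδ₀ : 0 ≤ δ)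
    (hδ₁ : δ < 1 - 1 / (Fintype.card F : ℝ))
    (hr : Tendsto (fun n ↦ (r n / n : ℝ)) atTop (𝓝 δ)) (hη : 0 < η) :
    ∀ᶠ n in atTop, (#(hammingBall F (Fin n) (r n)) : ℝ) ≤ η * (Fintype.card F : ℝ) ^ n := by
  obtain ⟨δ', hδδ', hδ'⟩ := exists_between hδ₁
  obtain ⟨y, hy₀, hy₁, b, hb₀, hb₁, hb⟩ := exists_one_sub_add_mul_pow_le (hδ₀.trans hδδ'.le) hδ'
    (sub_le_self 1 (by positivity))
  filter_upwards [hr.eventually_lt_const hδδ', eventually_gt_atTop 0,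
    (tendsto_pow_atTop_nhds_zero_of_lt_one hb₀ hb₁).eventually_le_const hη] with n hrn hn hbn
  have r_le : (r n : ℝ) ≤ δ' * n := ((div_lt_iff₀ (by positivity)).1 hrn).le
  calc (#(hammingBall F (Fin n) (r n)) : ℝ) ≤ b ^ n * (Fintype.card F : ℝ) ^ n := by
        simpa using card_hammingBall_le (ι := Fin n) hy₀ hy₁ (by simpa using hb n (r n) r_le)
    _ ≤ η * (Fintype.card F : ℝ) ^ n := by gcongr

lemma tendsto_add_one_sq_mul_pow {b : ℝ} (hb₀ : 0 ≤ b) (hb₁ : b < 1) :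
    Tendsto (fun n : ℕ ↦ ((n : ℝ) + 1) ^ 2 * b ^ n) atTop (𝓝 0) := by
  have two := tendsto_pow_const_mul_const_pow_of_lt_one 2 hb₀ hb₁
  have one := tendsto_self_mul_const_pow_of_lt_one hb₀ hb₁
  have zero := tendsto_pow_atTop_nhds_zero_of_lt_one hb₀ hb₁
  convert (two.add (one.const_mul 2)).add zero using 2 <;> ring

lemma eventually_card_schurPairs_le [AddGroup F] (hδ₀ : 0 < δ)
    (hδ₁ : δ < 1 - 1 / (Fintype.card F : ℝ))
    (hr : Tendsto (fun n ↦ (r n / n : ℝ)) atTop (𝓝 δ)) (hη : 0 < η) :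
    ∀ᶠ n in atTop, (#(schurPairs (hammingBall F (Fin n) (r n))) : ℝ) ≤
      η * #(hammingBall F (Fin n) (r n)) ^ 2 := by
  have one_lt_q : (1 : ℝ) < Fintype.card F := Nat.one_lt_cast.2 Fintype.one_lt_card
  obtain ⟨θ, hδθ, hθ⟩ := exists_between (lt_sumDensity one_lt_q hδ₀ hδ₁)
  obtain ⟨δ', hδδ', hδ'⟩ := exists_between hδθ
  obtain ⟨y, hy₀, hy₁, b, hb₀, hb₁, hb⟩ := exists_one_sub_add_mul_pow_le (hδ₀.trans hδδ').le hδ'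
    (hθ.le.trans (sumDensity_le_one one_lt_q hδ₀.le hδ₁))
  have density_tendsto : Tendsto (fun n ↦ sumDensity (Fintype.card F) (r n / n)) atTop
      (𝓝 (sumDensity (Fintype.card F) δ)) :=
    hr.mul (tendsto_const_nhds.sub (hr.const_mul _))
  filter_upwards [hr.eventually_const_lt hδ₀, hr.eventually_lt_const hδ₁,
    hr.eventually_lt_const hδδ', density_tendsto.eventually_const_lt hθ, eventually_gt_atTop 0,
    (tendsto_add_one_sq_mul_pow hb₀ hb₁).eventually_le_const hη]
    with n p_pos p_lt hrn θ_lt hn hbn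
  have hn' : (0 : ℝ) < n := Nat.cast_pos.2 hn
  have r_le : (r n : ℝ) ≤ δ' * n := ((div_lt_iff₀ hn').1 hrn).le
  have r_lt : r n < n := by
    have := (div_lt_one hn').1 (p_lt.trans_le (sub_le_self 1 (by positivity)))
    exact_mod_cast this
  have schur_le := card_schurPairs_hammingBall_le (F := F) (ι := Fin n) (r := r n) p_pos p_lt
    (by simp [hn'.ne']) (by simpa using r_lt) hy₀ hy₁ θ_lt.le (by simpa using hb n (r n) r_le)
  rw [Fintype.card_fin] at schur_le
  exact schur_le.trans (by gcongr)

lemma eventually_one_le_floor_mul (hδ : 0 < δ) : ∀ᶠ n : ℕ in atTop, 1 ≤ ⌊δ * n⌋₊ :=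
  (tendsto_nat_floor_atTop.comp
    (tendsto_natCast_atTop_atTop.const_mul_atTop hδ)).eventually_ge_atTop 1

lemma tendsto_floor_mul_sub_one_div (hδ : 0 < δ) :
    Tendsto (fun n : ℕ ↦ ((⌊δ * n⌋₊ - 1 : ℕ) / n : ℝ)) atTop (𝓝 δ) := by
  have floor_tendsto := (tendsto_nat_floor_mul_div_atTop hδ.le).comp
    (tendsto_natCast_atTop_atTop (R := ℝ))
  have shifted := floor_tendsto.sub tendsto_one_div_atTop_nhds_zero_nat
  rw [sub_zero] at shifted
  refine shifted.congr' ?_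
  filter_upwards [eventually_one_le_floor_mul hδ] with n hn
  simp [Nat.cast_sub hn, sub_div]

end Asymptotics

section Code

variable {F ι : Type*} [Field F] [Fintype F]

lemma cast_card_projectivization {V : Type*} [AddCommGroup V] [Module F V] [Module.Finite F V]
    [Fintype (ℙ F V)] :
    (Fintype.card (ℙ F V) : ℝ) =
      ((Fintype.card F : ℝ) ^ finrank F V - 1) / (Fintype.card F - 1) := by
  have := Module.finite_of_finite F (M := V)
  have card_points := Projectivization.card' F V
  rw [natCard_eq_pow_finrank (K := F), Nat.card_eq_fintype_card, Nat.card_eq_fintype_card]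
    at card_points
  have one_lt_q : (1 : ℝ) < Fintype.card F := Nat.one_lt_cast.2 Fintype.one_lt_card
  rw [eq_div_iff (sub_pos.2 one_lt_q).ne', eq_sub_iff_add_eq, ← Nat.cast_pow, card_points]
  simp [Nat.cast_sub Fintype.card_pos]

variable [DecidableEq F] [Fintype ι] [DecidableEq ι]

lemma smul_mem_hammingBall {r : ℕ} (a : Fˣ) {v : ι → F} (hv : v ∈ hammingBall F ι r) :
    a • v ∈ hammingBall F ι r := by
  rw [mem_hammingBall] at hv ⊢
  rwa [Units.smul_def, hammingNorm_smul fun _ ↦ .of_ne_zero a.ne_zero]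

lemma exists_submodule_lt_hammingNorm {k r : ℕ} {c : ℝ} (hc : c < 2)
    (hmean : ((Fintype.card F : ℝ) ^ k - 1) / (Fintype.card F - 1) *
      (#(hammingBall F ι r) / (Fintype.card F : ℝ) ^ Fintype.card ι) ≤ c)
    (hdens : (#(hammingBall F ι r) : ℝ) ≤ (2 - c) / 4 * (Fintype.card F : ℝ) ^ Fintype.card ι)
    (hschur : (Fintype.card F : ℝ) ^ 2 * #(schurPairs (hammingBall F ι r)) ≤
      (2 - c) / 4 * #(hammingBall F ι r) ^ 2) :
    ∃ C : Submodule F (ι → F), finrank F C = k ∧ ∀ x ∈ C, x ≠ 0 → r < hammingNorm x := by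
  have := Fintype.ofFinite (ℙ F (Fin k → F))
  obtain ⟨G, hG⟩ : ∃ G : (Fin k → F) →ₗ[F] ι → F, ∀ v ≠ 0, G v ∉ hammingBall F ι r := by
    refine exists_linearMap_forall_notMem (fun a w ↦ smul_mem_hammingBall a) hc ?_ ?_ hschur
    · simpa [cast_card_projectivization] using hmean
    · rw [div_le_iff₀ (by positivity)]
      simpa using hdens
  have G_injective : Function.Injective G := by
    refine (injective_iff_map_eq_zero G).2 fun v hv ↦ ?_
    by_contra hv₀
    exact hG v hv₀ (by simp [hv, mem_hammingBall])
  refine ⟨LinearMap.range G, by simp [LinearMap.finrank_range_of_inj G_injective], ?_⟩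
  rintro _ ⟨v, rfl⟩ hv
  have : v ≠ 0 := by rintro rfl; exact hv (map_zero G)
  simpa [mem_hammingBall] using hG v this

end Code

end GilbertVarshamov

open GilbertVarshamov in
theorem gv_bound_constant_improvement_general {F : Type*} [Field F] [Fintype F] [DecidableEq F]
    {δ c : ℝ} (hδ₀ : 0 < δ) (hδ₁ : δ < 1 - 1 / (Fintype.card F : ℝ)) (hc : c < 2) :
    ∀ᶠ n : ℕ in Filter.atTop, ∀ k : ℕ,
      ((Fintype.card F : ℝ) ^ k - 1) / ((Fintype.card F : ℝ) - 1) <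
        c * (Fintype.card F : ℝ) ^ n / (∑ i ∈ range ⌊δ * (n : ℝ)⌋₊,
          (n.choose i : ℝ) * ((Fintype.card F : ℝ) - 1) ^ i) →
      ∃ C : Submodule F (Fin n → F), Module.finrank F C = k ∧
        ∀ x ∈ C, x ≠ 0 → ⌊δ * (n : ℝ)⌋₊ ≤ hammingNorm x := by
  have η_pos : 0 < (2 - c) / 4 := by linarith
  have radius_tendsto := tendsto_floor_mul_sub_one_div hδ₀
  filter_upwards [eventually_one_le_floor_mul hδ₀,
    eventually_card_hammingBall_le hδ₀.le hδ₁ radius_tendsto η_pos,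
    eventually_card_schurPairs_le hδ₀ hδ₁ radius_tendsto
      (η := (2 - c) / 4 / (Fintype.card F : ℝ) ^ 2) (by positivity)]
    with n one_le_d dens schur k hk
  obtain ⟨r, hr⟩ := Nat.exists_eq_add_of_le' one_le_d
  rw [hr, Nat.add_sub_cancel] at dens schur
  have ball_card := cast_card_hammingBall (F := F) (ι := Fin n) r
  rw [Fintype.card_fin] at ball_card
  rw [hr, ← ball_card] at hk
  simp only [hr, Nat.succ_le_iff]
  refine exists_submodule_lt_hammingNorm hc ?_ (by simpa using dens) ?_
  · have ball_pos : (0 : ℝ) < #(hammingBall F (Fin n) r) :=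
      Nat.cast_pos.2 (card_pos.2 ⟨0, by simp [mem_hammingBall]⟩)
    rw [lt_div_iff₀ ball_pos] at hk
    rw [Fintype.card_fin, ← mul_div_assoc, div_le_iff₀ (by positivity)]
    exact hk.le
  · rwa [div_mul_eq_mul_div, le_div_iff₀' (by positivity)] at schur

/-- For a prime power `q` (realized as the cardinality of a finite field `F`)
and a constant `δ ∈ (0, 1 - 1/q)`, for all sufficiently large `n`, with `d = ⌊δn⌋`: if `k > 0`
satisfies `(q^k - 1)/(q - 1) < 1.7 · q^n / ∑_{i=0}^{d-1} C(n,i)(q-1)^i`, then there is a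
`k`-dimensional linear subspace of `F^n` all of whose nonzero elements have Hamming weight at
least `d`. -/
theorem gv_bound_constant_improvement
    (q : ℕ) (F : Type) [Field F] [Fintype F] [DecidableEq F] (hF : Fintype.card F = q)
    (δ : ℝ) (hδ0 : 0 < δ) (hδ1 : δ < 1 - 1 / (q : ℝ)) :
    ∃ N : ℕ, ∀ n : ℕ, N ≤ n → ∀ k : ℕ, 0 < k →
      ((q : ℝ) ^ k - 1) / ((q : ℝ) - 1) <
        1.7 * (q : ℝ) ^ n /
          (∑ i ∈ Finset.range ⌊δ * (n : ℝ)⌋₊, (n.choose i : ℝ) * ((q : ℝ) - 1) ^ i) →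
      ∃ C : Submodule F (Fin n → F), Module.finrank F C = k ∧
        ∀ x ∈ C, x ≠ 0 → ⌊δ * (n : ℝ)⌋₊ ≤ hammingNorm x := by
  subst hF
  obtain ⟨N, hN⟩ := Filter.eventually_atTop.1
    (gv_bound_constant_improvement_general (c := 1.7) hδ0 hδ1 (by norm_num))
  exact ⟨N, fun n hn k _ ↦ hN n hn k⟩
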